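/- arXiv:2107.06650 — 4 statements merged into one kernel-verified Lean document; each statement's English description precedes it below -/
import Mathlib

section
/- Let V > 0, σ > 0, μ ∈ ℝ, c > 0, and let f(b) = c·exp(−(b − μ)²/(2σ²)). Define F(b) = ∫₀ᵇ f(t) dt and s(b) = (V − b)·F(b). Then s''(V) < 0, and s'' has at most one root in the open interval (0, V): for any b₁, b₂ ∈ (0, V) with s''(b₁) = 0 and s''(b₂) = 0, one has b₁ = b₂. -/
/-!
On `(a, ∞)` the expected surplus `s` satisfies `s'' b = (V - b) * f' b - 2 * f b`, which is
`-2 * f V` at `b = V`. Where `f > 0`, a root of `s''` is a solution of `(V - b) * (log f)' b = 2`.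
For a log-concave `f` the score `(log f)'` is antitone, and it is positive at each solution `b < V`.
Between two solutions below `V` the factor `V - b` would strictly decrease while `(log f)'` does not
increase, so the two products could not both equal `2`. Gaussian densities are log-concave.
-/

open MeasureTheory Set
open scoped Topology

section LogConcave

variable {a b : ℝ} {f g : ℝ → ℝ}

theorem bddAbove_image_Ioo_of_concaveOn_Ioi (hg : ConcaveOn ℝ (Ioi a) g) :
    BddAbove (g '' Ioo a b) := by
  -- Left of `b`, a concave function lies below its secant line through `b` and `b + 1`.
  refine ⟨g b + |g (b + 1) - g b| * (b - a), ?_⟩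
  rintro _ ⟨x, ⟨hax, hxb⟩, rfl⟩
  have slope_le : (g (b + 1) - g b) / (b + 1 - b) ≤ (g b - g x) / (b - x) :=
    hg.slope_anti_adjacent hax (mem_Ioi.2 (by linarith)) hxb (by linarith)
  rw [add_sub_cancel_left, div_one, le_div_iff₀ (sub_pos.2 hxb)] at slope_le
  calc g x ≤ g b + -(g (b + 1) - g b) * (b - x) := by linarith
    _ ≤ g b + |g (b + 1) - g b| * (b - a) := by
      gcongr
      exact neg_le_abs _

theorem intervalIntegrable_of_concaveOn_log (hcont : ContinuousOn f (Ioi a))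
    (hpos : ∀ x ∈ Ioi a, 0 < f x) (hlog : ConcaveOn ℝ (Ioi a) (Real.log ∘ f)) (hab : a ≤ b) :
    IntervalIntegrable f volume a b := by
  obtain ⟨M, hM⟩ := bddAbove_image_Ioo_of_concaveOn_Ioi (b := b) hlog
  have norm_le : ∀ x ∈ Ioo a b, ‖f x‖ ≤ Real.exp M := fun x hx => by
    rw [Real.norm_of_nonneg (hpos x hx.1).le, ← Real.log_le_iff_le_exp (hpos x hx.1)]
    exact hM (mem_image_of_mem _ hx)
  rw [intervalIntegrable_iff_integrableOn_Ioo_of_le hab]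
  exact .of_bound measure_Ioo_lt_top
    ((hcont.mono Ioo_subset_Ioi_self).aestronglyMeasurable measurableSet_Ioo) (Real.exp M)
    (ae_restrict_of_forall_mem measurableSet_Ioo norm_le)

theorem antitoneOn_logDeriv_of_concaveOn_log (hdiff : DifferentiableOn ℝ f (Ioi a))
    (hpos : ∀ x ∈ Ioi a, 0 < f x) (hlog : ConcaveOn ℝ (Ioi a) (Real.log ∘ f)) :
    AntitoneOn (logDeriv f) (Ioi a) := by
  have hdiffAt : ∀ x ∈ Ioi a, DifferentiableAt ℝ f x := fun x hx =>
    hdiff.differentiableAt (Ioi_mem_nhds hx)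
  refine (hlog.antitoneOn_deriv fun x hx => (hdiffAt x hx).log (hpos x hx).ne').congr ?_
  exact fun x hx => Real.deriv_log_comp_eq_logDeriv (hdiffAt x hx) (hpos x hx).ne'

theorem concaveOn_log_const_mul_exp_neg_sq {c : ℝ} (hc : c ≠ 0) (μ σ : ℝ) :
    ConcaveOn ℝ univ (Real.log ∘ fun b => c * Real.exp (-(b - μ) ^ 2 / (2 * σ ^ 2))) := by
  have hsq : ConvexOn ℝ univ fun b : ℝ => (b - μ) ^ 2 := by
    simpa only [preimage_univ, Function.comp_def, ← sub_eq_add_neg]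
      using even_two.convexOn_pow.translate_left (-μ)
  have hquad := (hsq.smul (c := (2 * σ ^ 2)⁻¹) (by positivity)).neg.add_const (Real.log c)
  refine hquad.congr fun b _ => ?_
  simp only [Function.comp_apply, Real.log_mul hc (Real.exp_ne_zero _), Real.log_exp,
    Pi.add_apply, Pi.neg_apply, smul_eq_mul]
  ring

end LogConcave

theorem subsingleton_setOf_sub_mul_eq_of_antitoneOn {𝕜 : Type*} [Ring 𝕜] [LinearOrder 𝕜]
    [IsStrictOrderedRing 𝕜] {S : Set 𝕜} {ψ : 𝕜 → 𝕜} {V k : 𝕜} (hψ : AntitoneOn ψ S) (hk : 0 < k) :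
    {b ∈ S | b < V ∧ (V - b) * ψ b = k}.Subsingleton := by
  rintro x ⟨hxS, hxV, hx⟩ y ⟨hyS, hyV, hy⟩
  wlog hxy : x ≤ y generalizing x y
  · exact (this hyS hyV hy hxS hxV hx (le_of_not_ge hxy)).symm
  by_contra hne
  have hψy : 0 < ψ y := pos_of_mul_pos_right (hy ▸ hk) (sub_pos.2 hyV).le
  have : k < k := calc
    k = (V - y) * ψ y := hy.symm
    _ < (V - x) * ψ y := by gcongr; exact lt_of_le_of_ne hxy hne
    _ ≤ (V - x) * ψ x := mul_le_mul_of_nonneg_left (hψ hxS hyS hxy) (sub_pos.2 hxV).le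
    _ = k := hx
  exact this.false

/-- The expected surplus of a bidder with valuation `V` who bids `b` when the highest competing bid
has density `f` on `(a, ∞)`: the margin `V - b` times the winning probability `∫ t in a..b, f t`.
The density is not required to be normalized. -/
noncomputable def expectedSurplus (f : ℝ → ℝ) (a V b : ℝ) : ℝ :=
  (V - b) * ∫ t in a..b, f t

section ExpectedSurplus

variable {a b V : ℝ} {f : ℝ → ℝ}

theorem hasDerivAt_expectedSurplus (hint : IntervalIntegrable f volume a b)
    (hmeas : StronglyMeasurableAtFilter f (𝓝 b)) (hcont : ContinuousAt f b) :
    HasDerivAt (expectedSurplus f a V) ((V - b) * f b - ∫ t in a..b, f t) b := by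
  have hF := intervalIntegral.integral_hasDerivAt_right hint hmeas hcont
  exact (((hasDerivAt_id b).const_sub V).mul hF).congr_deriv (by simp only [id]; ring)

theorem deriv_deriv_expectedSurplus (hint : ∀ x ∈ Ioi a, IntervalIntegrable f volume a x)
    (hdiff : DifferentiableOn ℝ f (Ioi a)) (hb : b ∈ Ioi a) :
    deriv (deriv (expectedSurplus f a V)) b = (V - b) * deriv f b - 2 * f b := by
  have hmeas := hdiff.continuousOn.stronglyMeasurableAtFilter (μ := volume) isOpen_Ioi
  have hdiffAt : ∀ x ∈ Ioi a, DifferentiableAt ℝ f x := fun x hx =>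
    hdiff.differentiableAt (Ioi_mem_nhds hx)
  have deriv_eq : deriv (expectedSurplus f a V) =ᶠ[𝓝 b]
      fun x => (V - x) * f x - ∫ t in a..x, f t := by
    filter_upwards [Ioi_mem_nhds hb] with x hx
    exact (hasDerivAt_expectedSurplus (hint x hx) (hmeas x hx) (hdiffAt x hx).continuousAt).deriv
  have hF := intervalIntegral.integral_hasDerivAt_right (hint b hb) (hmeas b hb)
    (hdiffAt b hb).continuousAt
  rw [deriv_eq.deriv_eq]
  refine HasDerivAt.deriv ?_
  exact ((((hasDerivAt_id b).const_sub V).mul (hdiffAt b hb).hasDerivAt).sub hF).congr_deriv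
    (by simp only [id]; ring)

theorem surplus_second_deriv_truncNormal_roots_general (hV : a < V)
    (hdiff : DifferentiableOn ℝ f (Ioi a)) (hpos : ∀ x ∈ Ioi a, 0 < f x)
    (hlog : ConcaveOn ℝ (Ioi a) (Real.log ∘ f)) :
    deriv (deriv (expectedSurplus f a V)) V < 0 ∧
      {b ∈ Ioo a V | deriv (deriv (expectedSurplus f a V)) b = 0}.Subsingleton := by
  have deriv2_eq : ∀ b ∈ Ioi a,
      deriv (deriv (expectedSurplus f a V)) b = (V - b) * deriv f b - 2 * f b := fun b =>
    deriv_deriv_expectedSurplus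
      (fun x hx => intervalIntegrable_of_concaveOn_log hdiff.continuousOn hpos hlog (le_of_lt hx))
      hdiff
  constructor
  · rw [deriv2_eq V hV, sub_self, zero_mul, zero_sub, neg_lt_zero]
    exact mul_pos two_pos (hpos V hV)
  · have hanti := antitoneOn_logDeriv_of_concaveOn_log hdiff hpos hlog
    refine (subsingleton_setOf_sub_mul_eq_of_antitoneOn (V := V) hanti two_pos).anti ?_
    rintro b ⟨⟨hab, hbV⟩, hroot⟩
    refine ⟨hab, hbV, ?_⟩
    rw [deriv2_eq b hab, sub_eq_zero] at hroot
    rw [logDeriv_apply, ← mul_div_assoc, div_eq_iff (hpos b hab).ne', hroot]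

end ExpectedSurplus

/-- For the truncated-normal density (up to a positive constant c),
s''(V) < 0 and s'' has at most one root in (0, V). -/
theorem surplus_second_deriv_truncNormal_roots (V σ μ c : ℝ) (hV : 0 < V) (hσ : 0 < σ)
    (hc : 0 < c) (f F s : ℝ → ℝ)
    (hf : f = fun b => c * Real.exp (-(b - μ) ^ 2 / (2 * σ ^ 2)))
    (hF : F = fun b => ∫ t in (0 : ℝ)..b, f t)
    (hs : s = fun b => (V - b) * F b) :
    deriv (deriv s) V < 0 ∧
    ∀ b₁ ∈ Set.Ioo (0 : ℝ) V, ∀ b₂ ∈ Set.Ioo (0 : ℝ) V,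
      deriv (deriv s) b₁ = 0 → deriv (deriv s) b₂ = 0 → b₁ = b₂ := by
  subst hf hF hs
  have h := surplus_second_deriv_truncNormal_roots_general hV
    (f := fun b => c * Real.exp (-(b - μ) ^ 2 / (2 * σ ^ 2))) (by fun_prop)
    (fun _ _ => by positivity)
    ((concaveOn_log_const_mul_exp_neg_sq hc.ne' μ σ).subset (subset_univ _) (convex_Ioi 0))
  exact ⟨h.1, fun b₁ hb₁ b₂ hb₂ hroot₁ hroot₂ => h.2 ⟨hb₁, hroot₁⟩ ⟨hb₂, hroot₂⟩⟩
end

section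
/- Let V > 0, α > 0, β > 0, and let f(b) = (β^α / Γ(α))·b^(α−1)·exp(−βb) be the gamma density. Define F(b) = ∫₀ᵇ f(t) dt and s(b) = (V − b)·F(b). Then s''(V) < 0, and s'' has at most one root in the open interval (0, V): for any b₁, b₂ ∈ (0, V) with s''(b₁) = 0 and s''(b₂) = 0, one has b₁ = b₂. -/
/-!
Differentiating twice, `s'' b = (V - b) * f' b - 2 * f b`, which is `-2 * f V` at `b = V`. On
`(0, V)` a root of `s''` is a solution of `b * f' b / f b = 2 * b / (V - b)`. The right-hand side is
strictly increasing, so there is at most one solution as soon as the elasticity `b * f' b / f b` is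
nonincreasing. For the gamma density the elasticity is `α - 1 - β * b`; unlike `f' / f`, it is
nonincreasing also for `α < 1`.
-/

open Filter Set MeasureTheory
open scoped Topology

theorem deriv_deriv_const_sub_mul {𝕜 : Type*} [NontriviallyNormedField 𝕜] {F f : 𝕜 → 𝕜}
    {c x : 𝕜} (hF : ∀ᶠ y in 𝓝 x, HasDerivAt F (f y) y) (hf : DifferentiableAt 𝕜 f x) :
    deriv (deriv fun y => (c - y) * F y) x = (c - x) * deriv f x - 2 * f x := by
  have first_deriv : deriv (fun y => (c - y) * F y) =ᶠ[𝓝 x] fun y => (c - y) * f y - F y := by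
    filter_upwards [hF] with y hy
    exact ((((hasDerivAt_id' y).const_sub c).mul hy).congr_deriv (by ring)).deriv
  have second_deriv : HasDerivAt (fun y => (c - y) * f y - F y)
      ((c - x) * deriv f x - 2 * f x) x :=
    ((((hasDerivAt_id' x).const_sub c).mul hf.hasDerivAt).sub hF.self_of_nhds).congr_deriv (by ring)
  rw [first_deriv.deriv_eq, second_deriv.deriv]

theorem strictMonoOn_div_const_sub {K : Type*} [Field K] [LinearOrder K] [IsStrictOrderedRing K]
    {c : K} (hc : 0 < c) : StrictMonoOn (fun x => x / (c - x)) (Iio c) := by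
  intro x hx y hy hxy
  rw [div_lt_div_iff₀ (sub_pos.mpr hx) (sub_pos.mpr hy)]
  linarith [mul_lt_mul_of_pos_right hxy hc]

theorem mul_logDeriv_eq_of_const_sub_mul_deriv_eq {𝕜 : Type*} [NontriviallyNormedField 𝕜]
    {f : 𝕜 → 𝕜} {c x : 𝕜} (hx : x ≠ c) (hf : f x ≠ 0) (h : (c - x) * deriv f x = 2 * f x) :
    x * logDeriv f x = 2 * (x / (c - x)) := by
  have hcx : c - x ≠ 0 := sub_ne_zero.mpr hx.symm
  rw [logDeriv_apply]
  field_simp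
  linear_combination x * h

theorem differentiableOn_mul_rpow_mul_exp (C p r : ℝ) :
    DifferentiableOn ℝ (fun x => C * x ^ p * Real.exp (r * x)) {0}ᶜ := by
  intro x hx
  have hrpow : DifferentiableAt ℝ (fun x : ℝ => x ^ p) x :=
    Real.differentiableAt_rpow_const_of_ne p hx
  exact ((hrpow.const_mul C).mul (by fun_prop)).differentiableWithinAt

theorem intervalIntegrable_mul_rpow_mul_exp {p : ℝ} (hp : -1 < p) (C r a b : ℝ) :
    IntervalIntegrable (fun x => C * x ^ p * Real.exp (r * x)) volume a b :=
  ((intervalIntegral.intervalIntegrable_rpow' hp).const_mul C).mul_continuousOn (by fun_prop)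

theorem hasDerivAt_integral_mul_rpow_mul_exp {p : ℝ} (hp : -1 < p) (C r a : ℝ) {b : ℝ}
    (hb : b ≠ 0) :
    HasDerivAt (fun u => ∫ t in a..u, C * t ^ p * Real.exp (r * t))
      (C * b ^ p * Real.exp (r * b)) b := by
  have hcont := (differentiableOn_mul_rpow_mul_exp C p r).continuousOn
  exact intervalIntegral.integral_hasDerivAt_right
    (intervalIntegrable_mul_rpow_mul_exp hp C r a b)
    (hcont.stronglyMeasurableAtFilter isOpen_compl_singleton b hb)
    (hcont.continuousAt (isOpen_compl_singleton.mem_nhds hb))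

theorem mul_logDeriv_mul_rpow_mul_exp {C x : ℝ} (hC : C ≠ 0) (hx : 0 < x) (p r : ℝ) :
    x * logDeriv (fun x => C * x ^ p * Real.exp (r * x)) x = p + r * x := by
  have hrpow : HasDerivAt (fun x : ℝ => x ^ p) (p * x ^ (p - 1)) x :=
    Real.hasDerivAt_rpow_const (Or.inl hx.ne')
  have hexp : HasDerivAt (fun x => Real.exp (r * x)) (Real.exp (r * x) * r) x :=
    (hasDerivAt_const_mul r).exp
  have hprod : HasDerivAt (fun x => C * x ^ p * Real.exp (r * x))
      (C * (p * x ^ (p - 1)) * Real.exp (r * x) + C * x ^ p * (Real.exp (r * x) * r)) x :=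
    (hrpow.const_mul C).mul hexp
  have hxp : x ^ p ≠ 0 := (Real.rpow_pos_of_pos hx p).ne'
  rw [logDeriv_apply, hprod.deriv, Real.rpow_sub_one hx.ne']
  field_simp

theorem antitoneOn_mul_logDeriv_mul_rpow_mul_exp {C r : ℝ} (hC : C ≠ 0) (hr : r ≤ 0) (p : ℝ) :
    AntitoneOn (fun x => x * logDeriv (fun x => C * x ^ p * Real.exp (r * x)) x) (Ioi 0) := by
  intro x hx y hy hxy
  simp only [mul_logDeriv_mul_rpow_mul_exp hC hx, mul_logDeriv_mul_rpow_mul_exp hC hy]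
  linarith [mul_le_mul_of_nonpos_left hxy hr]

theorem surplus_second_deriv_gamma_roots_general {V : ℝ} (hV : 0 < V) {f F : ℝ → ℝ}
    (hF : ∀ b > 0, HasDerivAt F (f b) b) (hf : DifferentiableOn ℝ f (Ioi 0))
    (hpos : ∀ b ∈ Ioc 0 V, 0 < f b)
    (hanti : AntitoneOn (fun b => b * logDeriv f b) (Ioo 0 V)) :
    deriv (deriv fun b => (V - b) * F b) V < 0 ∧
    ∀ b₁ ∈ Ioo (0 : ℝ) V, ∀ b₂ ∈ Ioo (0 : ℝ) V,
      deriv (deriv fun b => (V - b) * F b) b₁ = 0 →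
      deriv (deriv fun b => (V - b) * F b) b₂ = 0 → b₁ = b₂ := by
  have second_deriv (b : ℝ) (hb : 0 < b) :
      deriv (deriv fun b => (V - b) * F b) b = (V - b) * deriv f b - 2 * f b :=
    deriv_deriv_const_sub_mul ((eventually_gt_nhds hb).mono hF)
      (hf.differentiableAt (Ioi_mem_nhds hb))
  have excess_strictAnti :
      StrictAntiOn (fun b => b * logDeriv f b - 2 * (b / (V - b))) (Ioo 0 V) := by
    intro x hx y hy hxy
    linarith [hanti hx hy hxy.le, strictMonoOn_div_const_sub hV hx.2 hy.2 hxy]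
  have excess_eq_zero (b : ℝ) (hb : b ∈ Ioo 0 V)
      (hroot : deriv (deriv fun b => (V - b) * F b) b = 0) :
      b * logDeriv f b - 2 * (b / (V - b)) = 0 := by
    rw [second_deriv b hb.1, sub_eq_zero] at hroot
    exact sub_eq_zero.mpr <| mul_logDeriv_eq_of_const_sub_mul_deriv_eq hb.2.ne
      (hpos b (Ioo_subset_Ioc_self hb)).ne' hroot
  constructor
  · rw [second_deriv V hV]
    linarith [hpos V (right_mem_Ioc.mpr hV)]
  · intro b₁ hb₁ b₂ hb₂ hroot₁ hroot₂
    exact excess_strictAnti.injOn hb₁ hb₂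
      ((excess_eq_zero b₁ hb₁ hroot₁).trans (excess_eq_zero b₂ hb₂ hroot₂).symm)

/-- For the gamma density, s''(V) < 0 and s'' has at most one
root in (0, V). -/
theorem surplus_second_deriv_gamma_roots (V α β : ℝ) (hV : 0 < V) (hα : 0 < α)
    (hβ : 0 < β) (f F s : ℝ → ℝ)
    (hf : f = fun b => β ^ α / Real.Gamma α * b ^ (α - 1) * Real.exp (-β * b))
    (hF : F = fun b => ∫ t in (0 : ℝ)..b, f t)
    (hs : s = fun b => (V - b) * F b) :
    deriv (deriv s) V < 0 ∧
    ∀ b₁ ∈ Set.Ioo (0 : ℝ) V, ∀ b₂ ∈ Set.Ioo (0 : ℝ) V,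
      deriv (deriv s) b₁ = 0 → deriv (deriv s) b₂ = 0 → b₁ = b₂ := by
  have hC : 0 < β ^ α / Real.Gamma α :=
    div_pos (Real.rpow_pos_of_pos hβ α) (Real.Gamma_pos_of_pos hα)
  subst hf hF hs
  exact surplus_second_deriv_gamma_roots_general hV
    (fun b hb => hasDerivAt_integral_mul_rpow_mul_exp (by linarith) _ _ 0 hb.ne')
    ((differentiableOn_mul_rpow_mul_exp _ _ _).mono fun _ hb => ne_of_gt hb)
    (fun b hb => mul_pos (mul_pos hC (Real.rpow_pos_of_pos hb.1 _)) (Real.exp_pos _))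
    ((antitoneOn_mul_logDeriv_mul_rpow_mul_exp hC.ne' (by linarith) _).mono Ioo_subset_Ioi_self)
end

section
/- Let V > 0, σ > 0, μ ∈ ℝ, and let f be the normal density with mean μ and variance σ² truncated to (0, ∞): f(b) = exp(−(b − μ)²/(2σ²)) / (√(2π)·σ·(1 − Φ(−μ/σ))) for b > 0, where Φ is the standard normal CDF. Define F(b) = ∫₀ᵇ f(t) dt and s(b) = (V − b)·F(b). Then s attains a global maximum over [0, V] at some point b* ∈ (0, V), and no point of (0, V) is a local minimum of s on (0, V). -/
open MeasureTheory

/-!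
On `(0, V)` the surplus is strictly log-concave: `log (V - b)` is strictly concave, and the
distribution function `F` inherits log-concavity from its density `f`. The latter amounts to `f / F`
being antitone, which follows by integrating `f t * f y ≤ f x * f (t + (y - x))` over `t ∈ (0, x)`
for `x ≤ y`. Hence the surplus has no interior local minimum; as it vanishes at both endpoints and
is positive in between, its maximum over `[0, V]` is interior.
-/

open Set Filter Topology

lemma add_le_add_of_concaveOn {𝕜 : Type*} [Field 𝕜] [LinearOrder 𝕜] [IsStrictOrderedRing 𝕜]
    {S : Set 𝕜} {g : 𝕜 → 𝕜} (hg : ConcaveOn 𝕜 S g) {x y d : 𝕜} (hx : x ∈ S) (hyd : y + d ∈ S)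
    (hxy : x ≤ y) (hd : 0 ≤ d) :
    g x + g (y + d) ≤ g (x + d) + g y := by
  obtain ⟨α, β, hα, hβ, hαβ, hcomb⟩ : x + d ∈ segment 𝕜 x (y + d) :=
    Icc_subset_segment ⟨by linarith, by linarith⟩
  have hcomb' : β • x + α • (y + d) = y := by
    simp only [smul_eq_mul] at hcomb ⊢
    linear_combination (x + (y + d)) * hαβ - hcomb
  have hle := hg.2 hx hyd hα hβ hαβ
  have hle' := hg.2 hx hyd hβ hα (by rwa [add_comm])
  rw [hcomb] at hle
  rw [hcomb'] at hle'
  simp only [smul_eq_mul] at hle hle'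
  linear_combination hle + hle' - (g x + g (y + d)) * hαβ

lemma not_isLocalMinOn_of_strictConcaveOn {E : Type*} [AddCommGroup E] [Module ℝ E]
    [TopologicalSpace E] [IsTopologicalAddGroup E] [ContinuousSMul ℝ E] [Nontrivial E] {U : Set E}
    (hU : IsOpen U) {g : E → ℝ} (hg : StrictConcaveOn ℝ U g) {x : E} (hx : x ∈ U) :
    ¬ IsLocalMinOn g U x := by
  intro hmin
  have hgood : ∀ᶠ y in 𝓝 x, y ∈ U ∧ g x ≤ g y :=
    (hU.eventually_mem hx).and (hmin.isLocalMin (hU.mem_nhds hx))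
  have hsub : Tendsto (fun v : E => x - v) (𝓝 0) (𝓝 x) :=
    Continuous.tendsto' (by fun_prop) _ _ (sub_zero x)
  have hadd : Tendsto (fun v : E => x + v) (𝓝 0) (𝓝 x) :=
    Continuous.tendsto' (by fun_prop) _ _ (add_zero x)
  have := Module.punctured_nhds_neBot ℝ E 0
  obtain ⟨v, ⟨⟨hsubU, hsub_le⟩, haddU, hadd_le⟩, hv⟩ :=
    (((hsub.eventually hgood).and (hadd.eventually hgood)).filter_mono nhdsWithin_le_nhds
      |>.and (eventually_mem_nhdsWithin (a := (0 : E)) (s := {0}ᶜ))).exists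
  have hne : x - v ≠ x + v := fun h => by
    have hdouble : (2 : ℝ) • v = 0 := by
      rw [two_smul, ← sub_eq_zero.2 h.symm]
      abel
    exact hv ((smul_eq_zero_iff_right two_ne_zero).1 hdouble)
  exact (hg.lt_on_openSegment hsubU haddU hne (mem_openSegment_sub_add x v)).not_ge
    (le_min hsub_le hadd_le)

section LogConcave

variable {E : Type*} [AddCommGroup E] [Module ℝ E]

/-- A function that is positive on `S` and whose logarithm is concave there. Positivity is required
because `Real.log` takes junk values on nonpositive numbers. -/
structure LogConcaveOn (S : Set E) (f : E → ℝ) : Prop where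
  pos : ∀ x ∈ S, 0 < f x
  concaveOn_log : ConcaveOn ℝ S fun x => Real.log (f x)

/-- The strict form of `LogConcaveOn`, which excludes local minima in the interior of `S`. -/
structure StrictLogConcaveOn (S : Set E) (f : E → ℝ) : Prop where
  pos : ∀ x ∈ S, 0 < f x
  strictConcaveOn_log : StrictConcaveOn ℝ S fun x => Real.log (f x)

variable {S T : Set E} {f g : E → ℝ}

lemma logConcaveOn_exp (hg : ConcaveOn ℝ S g) : LogConcaveOn S fun x => Real.exp (g x) where
  pos _ _ := Real.exp_pos _
  concaveOn_log := by simpa only [Real.log_exp] using hg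

lemma LogConcaveOn.subset (hf : LogConcaveOn T f) (hST : S ⊆ T) (hS : Convex ℝ S) :
    LogConcaveOn S f where
  pos x hx := hf.pos x (hST hx)
  concaveOn_log := hf.concaveOn_log.subset hST hS

lemma StrictLogConcaveOn.subset (hf : StrictLogConcaveOn T f) (hST : S ⊆ T) (hS : Convex ℝ S) :
    StrictLogConcaveOn S f where
  pos x hx := hf.pos x (hST hx)
  strictConcaveOn_log := hf.strictConcaveOn_log.subset hST hS

lemma LogConcaveOn.div_const (hf : LogConcaveOn S f) {c : ℝ} (hc : 0 < c) :
    LogConcaveOn S fun x => f x / c where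
  pos x hx := div_pos (hf.pos x hx) hc
  concaveOn_log := (hf.concaveOn_log.add_const (-Real.log c)).congr fun x hx => by
    simp only [Pi.add_apply, Real.log_div (hf.pos x hx).ne' hc.ne', sub_eq_add_neg]

lemma StrictLogConcaveOn.mul_logConcaveOn (hf : StrictLogConcaveOn S f) (hg : LogConcaveOn S g) :
    StrictLogConcaveOn S fun x => f x * g x where
  pos x hx := mul_pos (hf.pos x hx) (hg.pos x hx)
  strictConcaveOn_log := (hf.strictConcaveOn_log.add_concaveOn hg.concaveOn_log).congr
    fun x hx => (Real.log_mul (hf.pos x hx).ne' (hg.pos x hx).ne').symm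

lemma StrictLogConcaveOn.not_isLocalMinOn [TopologicalSpace E] [IsTopologicalAddGroup E]
    [ContinuousSMul ℝ E] [Nontrivial E] (hf : StrictLogConcaveOn S f) (hS : IsOpen S) {x : E}
    (hx : x ∈ S) :
    ¬ IsLocalMinOn f S x := fun hmin =>
  not_isLocalMinOn_of_strictConcaveOn hS hf.strictConcaveOn_log hx <|
    hmin.mono fun _ hle => Real.log_le_log (hf.pos x hx) hle

lemma strictLogConcaveOn_const_sub (V : ℝ) : StrictLogConcaveOn (Iio V) fun b => V - b where
  pos _ hb := sub_pos.2 hb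
  strictConcaveOn_log := by
    have himage : (fun b => V - b) '' Iio V = Ioi 0 := by simp
    refine StrictConcaveOn.comp_concaveOn (g := Real.log) ?_ ?_ ?_ sub_right_injective.injOn
    · simpa only [himage] using strictConcaveOn_log_Ioi
    · exact (concaveOn_const V (convex_Iio V)).sub (convexOn_id (convex_Iio V))
    · simpa only [himage] using Real.strictMonoOn_log.monotoneOn

end LogConcave

namespace LogConcaveOn

variable {f : ℝ → ℝ}

lemma mul_le_mul_add {S : Set ℝ} (hf : LogConcaveOn S f) {x y d : ℝ} (hx : x ∈ S)
    (hyd : y + d ∈ S) (hxy : x ≤ y) (hd : 0 ≤ d) :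
    f x * f (y + d) ≤ f (x + d) * f y := by
  have hsub : Icc x (y + d) ⊆ S := hf.concaveOn_log.1.ordConnected.out hx hyd
  have hfx := hf.pos x hx
  have hfyd := hf.pos (y + d) hyd
  have hfxd := hf.pos (x + d) (hsub ⟨by linarith, by linarith⟩)
  have hfy := hf.pos y (hsub ⟨hxy, by linarith⟩)
  rw [← Real.log_le_log_iff (mul_pos hfx hfyd) (mul_pos hfxd hfy),
    Real.log_mul hfx.ne' hfyd.ne', Real.log_mul hfxd.ne' hfy.ne']
  exact add_le_add_of_concaveOn hf.concaveOn_log hx hyd hxy hd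

variable {a : ℝ}

lemma continuousOn {U : Set ℝ} (hf : LogConcaveOn U f) (hU : IsOpen U) : ContinuousOn f U :=
  (hf.concaveOn_log.continuousOn hU).rexp.congr fun x hx => (Real.exp_log (hf.pos x hx)).symm

lemma exists_bound_on_Ioc (hf : LogConcaveOn (Ioi a) f) (b : ℝ) :
    ∃ M, ∀ x ∈ Ioc a b, f x ≤ M := by
  -- Translating by `1` moves `(a, b]` into a compact subset of `(a, ∞)`, at the cost of the
  -- constant factor `f b / f (b + 1)`.
  have hcont : ContinuousOn f (Icc (a + 1) (b + 1)) :=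
    (hf.continuousOn isOpen_Ioi).mono fun y hy => (lt_add_one a).trans_le hy.1
  obtain ⟨M, hM⟩ := isCompact_Icc.bddAbove_image hcont
  refine ⟨M * f b / f (b + 1), fun x hx => ?_⟩
  have hab : a < b := hx.1.trans_le hx.2
  have hab' : a < b + 1 := by linarith
  rw [le_div_iff₀ (hf.pos _ hab')]
  calc f x * f (b + 1) ≤ f (x + 1) * f b := hf.mul_le_mul_add hx.1 hab' hx.2 zero_le_one
    _ ≤ M * f b := mul_le_mul_of_nonneg_right
        (hM (mem_image_of_mem f ⟨by linarith [hx.1], by linarith [hx.2]⟩)) (hf.pos b hab).le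

lemma intervalIntegrable (hf : LogConcaveOn (Ioi a) f) {b : ℝ} (hab : a ≤ b) :
    IntervalIntegrable f volume a b := by
  obtain ⟨M, hM⟩ := hf.exists_bound_on_Ioc b
  have hmeas : AEStronglyMeasurable f (volume.restrict (Ioc a b)) :=
    ((hf.continuousOn isOpen_Ioi).mono Ioc_subset_Ioi_self).aestronglyMeasurable measurableSet_Ioc
  rw [intervalIntegrable_iff_integrableOn_Ioc_of_le hab]
  refine IntegrableOn.of_bound measure_Ioc_lt_top hmeas M ?_
  filter_upwards [ae_restrict_mem measurableSet_Ioc] with x hx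
  exact (Real.norm_of_nonneg (hf.pos x hx.1).le).trans_le (hM x hx)

lemma integral_pos (hf : LogConcaveOn (Ioi a) f) {b : ℝ} (hab : a < b) :
    0 < ∫ t in a..b, f t :=
  intervalIntegral.intervalIntegral_pos_of_pos_on (hf.intervalIntegrable hab.le)
    (fun t ht => hf.pos t ht.1) hab

lemma continuousOn_integral (hf : LogConcaveOn (Ioi a) f) {b : ℝ} (hab : a ≤ b) :
    ContinuousOn (fun x => ∫ t in a..x, f t) (Icc a b) := by
  have hint : IntegrableOn f (Icc a b) :=
    (intervalIntegrable_iff_integrableOn_Icc_of_le hab).1 (hf.intervalIntegrable hab)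
  rw [← uIcc_of_le hab] at hint ⊢
  exact intervalIntegral.continuousOn_primitive_interval hint

lemma hasDerivAt_integral (hf : LogConcaveOn (Ioi a) f) {b : ℝ} (hab : a < b) :
    HasDerivAt (fun x => ∫ t in a..x, f t) (f b) b :=
  have hcont : ContinuousOn f (Ioi a) := hf.continuousOn isOpen_Ioi
  intervalIntegral.integral_hasDerivAt_right (hf.intervalIntegrable hab.le)
    (hcont.stronglyMeasurableAtFilter isOpen_Ioi b hab) (hcont.continuousAt (Ioi_mem_nhds hab))

lemma integral_mul_le_mul_integral (hf : LogConcaveOn (Ioi a) f) {x y : ℝ} (hax : a < x)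
    (hxy : x ≤ y) :
    (∫ t in a..x, f t) * f y ≤ f x * ∫ t in a..y, f t := by
  have hay : a < y := hax.trans_le hxy
  have hint : IntervalIntegrable f volume (a + (y - x)) y :=
    (hf.intervalIntegrable hay.le).mono_set <| by
      rw [uIcc_of_le (by linarith), uIcc_of_le hay.le]
      exact Icc_subset_Icc_left (by linarith)
  have hint_shift : IntervalIntegrable (fun t => f (t + (y - x))) volume a x := by
    simpa using hint.comp_add_right (y - x)
  calc (∫ t in a..x, f t) * f y = ∫ t in a..x, f t * f y :=
        (intervalIntegral.integral_mul_const _ _).symm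
    _ ≤ ∫ t in a..x, f (t + (y - x)) * f x := by
        refine intervalIntegral.integral_mono_on_of_le_Ioo hax.le
          ((hf.intervalIntegrable hax.le).mul_const _) (hint_shift.mul_const _) fun t ht => ?_
        simpa using hf.mul_le_mul_add ht.1 (by simpa using hay) ht.2.le (sub_nonneg.2 hxy)
    _ = f x * ∫ t in (a + (y - x))..y, f t := by
        rw [intervalIntegral.integral_mul_const, mul_comm,
          intervalIntegral.integral_comp_add_right, add_sub_cancel]
    _ ≤ f x * ∫ t in a..y, f t := by
        refine mul_le_mul_of_nonneg_left ?_ (hf.pos x hax).le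
        refine intervalIntegral.integral_mono_interval (by linarith) (by linarith) le_rfl ?_
          (hf.intervalIntegrable hay.le)
        filter_upwards [ae_restrict_mem measurableSet_Ioc] with t ht
        exact (hf.pos t ht.1).le

lemma antitoneOn_div_integral (hf : LogConcaveOn (Ioi a) f) :
    AntitoneOn (fun b => f b / ∫ t in a..b, f t) (Ioi a) := by
  intro x hx y hy hxy
  have hmul := hf.integral_mul_le_mul_integral hx hxy
  rw [div_le_div_iff₀ (hf.integral_pos hy) (hf.integral_pos hx)]
  linarith

lemma integral (hf : LogConcaveOn (Ioi a) f) :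
    LogConcaveOn (Ioi a) fun b => ∫ t in a..b, f t where
  pos _ hb := hf.integral_pos hb
  concaveOn_log := by
    have hderiv : ∀ b ∈ Ioi a, HasDerivAt (fun x => Real.log (∫ t in a..x, f t))
        (f b / ∫ t in a..b, f t) b := fun b hb =>
      (hf.hasDerivAt_integral hb).log (hf.integral_pos hb).ne'
    refine AntitoneOn.concaveOn_of_deriv (convex_Ioi a)
      (fun b hb => (hderiv b hb).continuousAt.continuousWithinAt) ?_ ?_
    all_goals rw [interior_Ioi]
    · exact fun b hb => (hderiv b hb).differentiableAt.differentiableWithinAt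
    · exact hf.antitoneOn_div_integral.congr fun b hb => (hderiv b hb).deriv.symm

end LogConcaveOn

lemma exists_mem_Ioo_isMaxOn_Icc {X Y : Type*} [ConditionallyCompleteLinearOrder X]
    [DenselyOrdered X] [TopologicalSpace X] [OrderTopology X] [LinearOrder Y] [TopologicalSpace Y]
    [OrderTopology Y] {s : X → Y} {a b : X} (hab : a < b) (hs : ContinuousOn s (Icc a b))
    (heq : s a = s b) (hlt : ∀ x ∈ Ioo a b, s a < s x) :
    ∃ c ∈ Ioo a b, IsMaxOn s (Icc a b) c := by
  obtain ⟨c, hc, hmin | hmax⟩ := exists_Ioo_extr_on_Icc hab hs heq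
  · exact absurd (hmin (left_mem_Icc.2 hab.le)) (hlt c hc).not_ge
  · exact ⟨c, hc, hmax⟩

theorem surplus_global_max_truncNormal_general {a V : ℝ} (haV : a < V) {f F s : ℝ → ℝ}
    (hf : LogConcaveOn (Ioi a) f) (hF : F = fun b => ∫ t in a..b, f t)
    (hs : s = fun b => (V - b) * F b) :
    (∃ bStar ∈ Ioo a V, ∀ b ∈ Icc a V, s b ≤ s bStar) ∧
    ∀ b ∈ Ioo a V, ¬ IsLocalMinOn s (Ioo a V) b := by
  have hF_log : LogConcaveOn (Ioi a) F := hF ▸ hf.integral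
  have hs_log : StrictLogConcaveOn (Ioo a V) s := hs ▸
    ((strictLogConcaveOn_const_sub V).subset Ioo_subset_Iio_self (convex_Ioo a V)).mul_logConcaveOn
      (hF_log.subset Ioo_subset_Ioi_self (convex_Ioo a V))
  have hF_cont : ContinuousOn F (Icc a V) := hF ▸ hf.continuousOn_integral haV.le
  have hs_cont : ContinuousOn s (Icc a V) := by
    rw [hs]
    fun_prop
  have hsa : s a = 0 := by simp [hs, hF]
  have hsV : s V = 0 := by simp [hs]
  exact ⟨exists_mem_Ioo_isMaxOn_Icc haV hs_cont (hsa.trans hsV.symm)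
    fun b hb => hsa ▸ hs_log.pos b hb, fun b hb => hs_log.not_isLocalMinOn isOpen_Ioo hb⟩

lemma setIntegral_lt_integral_of_pos {X : Type*} [MeasurableSpace X] {ν : Measure X} {f : X → ℝ}
    (hf : Integrable f ν) (hpos : ∀ x, 0 < f x) {A : Set X} (hA : MeasurableSet A)
    (hcompl : ν Aᶜ ≠ 0) :
    ∫ x in A, f x ∂ν < ∫ x, f x ∂ν := by
  have hsupport : Function.support f = univ :=
    Function.support_eq_univ fun x => (hpos x).ne'
  have hcompl_pos : 0 < ∫ x in Aᶜ, f x ∂ν := by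
    rw [setIntegral_pos_iff_support_of_nonneg_ae (ae_of_all _ fun x => (hpos x).le)
      hf.integrableOn, hsupport, univ_inter]
    exact hcompl.bot_lt
  linarith [integral_add_compl hA hf]

open ProbabilityTheory in
lemma standardNormal_cdf_lt_one (x : ℝ) :
    (Real.sqrt (2 * Real.pi))⁻¹ * ∫ t in Iic x, Real.exp (-t ^ 2 / 2) < 1 :=
  calc (Real.sqrt (2 * Real.pi))⁻¹ * ∫ t in Iic x, Real.exp (-t ^ 2 / 2)
      = ∫ t in Iic x, gaussianPDFReal 0 1 t := by
        simp [gaussianPDFReal, integral_const_mul]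
    _ < ∫ t, gaussianPDFReal 0 1 t :=
        setIntegral_lt_integral_of_pos (integrable_gaussianPDFReal 0 1)
          (fun t => gaussianPDFReal_pos 0 1 t one_ne_zero) measurableSet_Iic (by simp)
    _ = 1 := integral_gaussianPDFReal_eq_one 0 one_ne_zero

lemma concaveOn_neg_sub_sq_div (μ : ℝ) {c : ℝ} (hc : 0 ≤ c) :
    ConcaveOn ℝ univ fun b => -(b - μ) ^ 2 / c := by
  have hsq : ConvexOn ℝ univ fun b : ℝ => (b - μ) ^ 2 :=
    (even_two.convexOn_pow (𝕜 := ℝ)).translate_left (-μ)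
  exact (hsq.smul (inv_nonneg.2 hc)).neg.congr fun b _ => by
    simp only [Pi.neg_apply, smul_eq_mul]
    ring

/-- For the normal density with mean μ and variance σ² truncated
to (0, ∞), the expected surplus s attains a global maximum over [0, V] at some
b* ∈ (0, V), and no point of (0, V) is a local minimum of s on (0, V).
Here Φ is the standard normal CDF. -/
theorem surplus_global_max_truncNormal (V σ μ : ℝ) (hV : 0 < V) (hσ : 0 < σ)
    (Φ f F s : ℝ → ℝ)
    (hΦ : Φ = fun x => (Real.sqrt (2 * Real.pi))⁻¹ * ∫ t in Set.Iic x, Real.exp (-t ^ 2 / 2))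
    (hf : f = fun b =>
      Real.exp (-(b - μ) ^ 2 / (2 * σ ^ 2)) / (Real.sqrt (2 * Real.pi) * σ * (1 - Φ (-μ / σ))))
    (hF : F = fun b => ∫ t in (0 : ℝ)..b, f t)
    (hs : s = fun b => (V - b) * F b) :
    (∃ bStar ∈ Set.Ioo (0 : ℝ) V, ∀ b ∈ Set.Icc (0 : ℝ) V, s b ≤ s bStar) ∧
    ∀ b ∈ Set.Ioo (0 : ℝ) V, ¬ IsLocalMinOn s (Set.Ioo (0 : ℝ) V) b := by
  have hΦ_lt : 0 < 1 - Φ (-μ / σ) := sub_pos.2 (hΦ ▸ standardNormal_cdf_lt_one _)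
  have hf_log : LogConcaveOn univ f := hf ▸
    (logConcaveOn_exp (concaveOn_neg_sub_sq_div μ (by positivity))).div_const (by positivity)
  exact surplus_global_max_truncNormal_general hV
    (hf_log.subset (subset_univ _) (convex_Ioi 0)) hF hs
end

section
/- Let V > 0, σ > 0, μ ∈ ℝ, and let f(b) = (1/(√(2π)·σ·b))·exp(−(ln b − μ)²/(2σ²)) be the log-normal density on (0, ∞). Define F(b) = ∫₀ᵇ f(t) dt and s(b) = (V − b)·F(b). Then s attains a global maximum over [0, V] at some point b* ∈ (0, V), and no point of (0, V) is a local minimum of s on (0, V). -/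
/-!
On `(0, V)` the surplus is positive and `log s = log (V - b) + log F`, where the first summand is
strictly concave. So if `F` is log-concave, `log s` is strictly concave and neither it nor `s` has
an interior local minimum; the maximum is interior because `s` vanishes at both endpoints.

The log-normal density is not log-concave, but its dilations have monotone likelihood ratio:
`f (x * u) / f x` is monotone in `x` for `0 < u < 1`. This is enough for `F` to be log-concave:
substituting `t = b * u` gives `F b / f b = b * ∫ u in 0..1, f (b * u) / f b`, which is monotone
in `b`, so `(log F)' = f / F` is antitone.
-/

open Real Set Filter Topology MeasureTheory

theorem not_isLocalMinOn_of_strictConcaveOn_s16 {E : Type*} [AddCommGroup E] [Module ℝ E]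
    [TopologicalSpace E] [ContinuousAdd E] [ContinuousSMul ℝ E] [Nontrivial E]
    {f : E → ℝ} {s : Set E} {x : E} (hf : StrictConcaveOn ℝ s f) (hs : s ∈ 𝓝 x) :
    ¬ IsLocalMinOn f s x := by
  intro hmin
  obtain ⟨v, hv⟩ := exists_ne (0 : E)
  have eventually_line (w : E) : ∀ᶠ t : ℝ in 𝓝[>] 0, x + t • w ∈ s ∧ f x ≤ f (x + t • w) := by
    have hline : Tendsto (fun t : ℝ => x + t • w) (𝓝[>] 0) (𝓝 x) := by
      have hcont : Continuous fun t : ℝ => x + t • w := by fun_prop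
      exact (hcont.tendsto' 0 x (by simp)).mono_left nhdsWithin_le_nhds
    exact hline.eventually (Filter.Eventually.and hs (hmin.isLocalMin hs))
  obtain ⟨t, ⟨⟨hright, hfright⟩, hleft, hfleft⟩, ht⟩ :=
    ((eventually_line v).and (eventually_line (-v))).and self_mem_nhdsWithin |>.exists
  have hne : x + t • v ≠ x + t • -v := by
    intro heq
    have hzero : (2 * t) • v = 0 := by linear_combination (norm := module) heq
    exact smul_ne_zero (mul_ne_zero two_ne_zero (ne_of_gt ht)) hv hzero
  have hmid : (1 / 2 : ℝ) • (x + t • v) + (1 / 2 : ℝ) • (x + t • -v) = x := by module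
  have hlt := hf.2 hright hleft hne one_half_pos one_half_pos (add_halves 1)
  rw [hmid, smul_eq_mul, smul_eq_mul] at hlt
  linarith

/-- The expected surplus of a bidder with valuation `V` who bids `b`, when `F` is the cumulative
distribution function of the minimum winning price. -/
def surplus (V : ℝ) (F : ℝ → ℝ) (b : ℝ) : ℝ := (V - b) * F b

section Surplus

variable {a V : ℝ} {F : ℝ → ℝ}

theorem surplus_pos {b : ℝ} (hb : b < V) (hF : 0 < F b) : 0 < surplus V F b :=
  mul_pos (sub_pos.2 hb) hF

theorem exists_isMaxOn_surplus (haV : a < V) (hF : ContinuousOn F (Icc a V)) (hFa : F a = 0)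
    (hFpos : ∀ b ∈ Ioo a V, 0 < F b) : ∃ c ∈ Ioo a V, IsMaxOn (surplus V F) (Icc a V) c := by
  obtain ⟨m, hm⟩ := nonempty_Ioo.2 haV
  have hcont : ContinuousOn (surplus V F) (Icc a V) :=
    (continuous_const.sub continuous_id).continuousOn.mul hF
  refine isCompact_Icc.exists_isMaxOn_mem_subset hcont (Ioo_subset_Icc_self hm) ?_
  rw [Icc_sdiff_Ioo_same haV.le]
  rintro b (rfl | rfl)
  · simpa only [surplus, hFa, mul_zero] using surplus_pos hm.2 (hFpos m hm)
  · simpa only [surplus, sub_self, zero_mul] using surplus_pos hm.2 (hFpos m hm)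

theorem strictConcaveOn_log_const_sub (V : ℝ) :
    StrictConcaveOn ℝ (Iio V) fun b => log (V - b) := by
  refine ⟨convex_Iio V, fun x hx y hy hxy p q hp hq hpq => ?_⟩
  have hcomb : V - (p • x + q • y) = p • (V - x) + q • (V - y) := by
    simp only [smul_eq_mul]
    linear_combination (-V) * hpq
  simp only [hcomb]
  exact strictConcaveOn_log_Ioi.2 (mem_Ioi.2 (sub_pos.2 hx)) (mem_Ioi.2 (sub_pos.2 hy))
    (sub_right_injective.ne hxy) hp hq hpq

theorem strictConcaveOn_log_surplus (hFpos : ∀ b ∈ Ioo a V, 0 < F b)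
    (hF : ConcaveOn ℝ (Ioo a V) fun b => log (F b)) :
    StrictConcaveOn ℝ (Ioo a V) fun b => log (surplus V F b) :=
  (((strictConcaveOn_log_const_sub V).subset Ioo_subset_Iio_self
    (convex_Ioo a V)).add_concaveOn hF).congr fun b hb =>
      (log_mul (sub_pos.2 hb.2).ne' (hFpos b hb).ne').symm

theorem not_isLocalMinOn_surplus (hFpos : ∀ b ∈ Ioo a V, 0 < F b)
    (hF : ConcaveOn ℝ (Ioo a V) fun b => log (F b)) {b : ℝ} (hb : b ∈ Ioo a V) :
    ¬ IsLocalMinOn (surplus V F) (Ioo a V) b := by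
  intro hmin
  refine not_isLocalMinOn_of_strictConcaveOn_s16 (strictConcaveOn_log_surplus hFpos hF)
    (isOpen_Ioo.mem_nhds hb) ?_
  filter_upwards [hmin] with x hx
  exact log_le_log (surplus_pos hb.2 (hFpos b hb)) hx

end Surplus

section Primitive

variable {f : ℝ → ℝ}

theorem integral_pos_of_pos_on_Ioi {b : ℝ} (hint : IntervalIntegrable f volume 0 b)
    (hpos : ∀ t > 0, 0 < f t) (hb : 0 < b) : 0 < ∫ t in (0 : ℝ)..b, f t :=
  intervalIntegral.intervalIntegral_pos_of_pos_on hint (fun t ht => hpos t ht.1) hb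

theorem integral_div_eq_mul_integral_dilation (f : ℝ → ℝ) (b : ℝ) :
    (∫ t in (0 : ℝ)..b, f t) / f b = b * ∫ u in (0 : ℝ)..1, f (b * u) / f b := by
  rw [intervalIntegral.integral_div, ← mul_div_assoc, intervalIntegral.mul_integral_comp_mul_left,
    mul_zero, mul_one]

theorem monotoneOn_integral_div (hint : ∀ b > 0, IntervalIntegrable f volume 0 b)
    (hpos : ∀ t > 0, 0 < f t)
    (hratio : ∀ u ∈ Ioo (0 : ℝ) 1, MonotoneOn (fun x => f (x * u) / f x) (Ioi 0)) :
    MonotoneOn (fun b => (∫ t in (0 : ℝ)..b, f t) / f b) (Ioi 0) := by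
  have hint_dilation (b : ℝ) (hb : 0 < b) :
      IntervalIntegrable (fun u => f (b * u) / f b) volume 0 1 := by
    simpa [hb.ne'] using (hint b hb).comp_mul_left (c := b) |>.div_const (f b)
  simp only [integral_div_eq_mul_integral_dilation]
  refine monotoneOn_id.mul (fun x hx y hy hxy => ?_) (fun b hb => le_of_lt hb) fun b hb => ?_
  · exact intervalIntegral.integral_mono_on_of_le_Ioo zero_le_one (hint_dilation x hx)
      (hint_dilation y hy) fun u hu => hratio u hu hx hy hxy
  · exact (intervalIntegral.intervalIntegral_pos_of_pos_on (hint_dilation b hb)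
      (fun u hu => div_pos (hpos _ (mul_pos hb hu.1)) (hpos b hb)) zero_lt_one).le

theorem hasDerivAt_log_integral {b : ℝ} (hcont : ContinuousOn f (Ioi 0))
    (hint : IntervalIntegrable f volume 0 b) (hpos : ∀ t > 0, 0 < f t) (hb : 0 < b) :
    HasDerivAt (fun b => log (∫ t in (0 : ℝ)..b, f t)) (f b / ∫ t in (0 : ℝ)..b, f t) b :=
  (intervalIntegral.integral_hasDerivAt_right hint
    (hcont.stronglyMeasurableAtFilter isOpen_Ioi b hb) (hcont.continuousAt (Ioi_mem_nhds hb))).log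
      (integral_pos_of_pos_on_Ioi hint hpos hb).ne'

theorem concaveOn_log_integral (hcont : ContinuousOn f (Ioi 0))
    (hint : ∀ b > 0, IntervalIntegrable f volume 0 b) (hpos : ∀ t > 0, 0 < f t)
    (hratio : ∀ u ∈ Ioo (0 : ℝ) 1, MonotoneOn (fun x => f (x * u) / f x) (Ioi 0)) :
    ConcaveOn ℝ (Ioi 0) fun b => log (∫ t in (0 : ℝ)..b, f t) := by
  have hderiv (b : ℝ) (hb : b ∈ Ioi 0) := hasDerivAt_log_integral hcont (hint b hb) hpos hb
  refine AntitoneOn.concaveOn_of_deriv (convex_Ioi 0)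
    (fun b hb => (hderiv b hb).continuousAt.continuousWithinAt) ?_ ?_ <;> rw [interior_Ioi]
  · exact fun b hb => (hderiv b hb).differentiableAt.differentiableWithinAt
  · intro x hx y hy hxy
    rw [(hderiv x hx).deriv, (hderiv y hy).deriv, ← inv_div, ← inv_div _ (f x)]
    exact inv_anti₀ (div_pos (integral_pos_of_pos_on_Ioi (hint x hx) hpos hx) (hpos x hx))
      (monotoneOn_integral_div hint hpos hratio hx hy hxy)

end Primitive

/-- The density of `exp X` for `X` normal with mean `μ` and standard deviation `σ`. It is meant
for arguments `t > 0` only: by the conventions for `Real.log` it is an odd function of `t`,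
and it vanishes at `0`. -/
noncomputable def logNormalDensity (μ σ t : ℝ) : ℝ :=
  1 / (√(2 * π) * σ * t) * exp (-(log t - μ) ^ 2 / (2 * σ ^ 2))

section LogNormal

variable {σ : ℝ} (μ : ℝ)

theorem logNormalDensity_pos (hσ : 0 < σ) {t : ℝ} (ht : 0 < t) : 0 < logNormalDensity μ σ t := by
  unfold logNormalDensity
  positivity

theorem continuousOn_logNormalDensity (hσ : 0 < σ) :
    ContinuousOn (logNormalDensity μ σ) (Ioi 0) := by
  intro t ht
  have ht₀ : t ≠ 0 := ne_of_gt ht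
  unfold logNormalDensity
  fun_prop (disch := positivity)

theorem logNormalDensity_le (hσ : 0 < σ) {t : ℝ} (ht : 0 < t) :
    logNormalDensity μ σ t ≤ 1 / (√(2 * π) * σ) * exp (σ ^ 2 / 2 - μ) := by
  have hexponent : -(log t - μ) ^ 2 / (2 * σ ^ 2) - log t
      = σ ^ 2 / 2 - μ - (log t - μ + σ ^ 2) ^ 2 / (2 * σ ^ 2) := by
    field_simp
    ring
  calc logNormalDensity μ σ t
      = 1 / (√(2 * π) * σ) * exp (-(log t - μ) ^ 2 / (2 * σ ^ 2) - log t) := by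
        rw [logNormalDensity, exp_sub, exp_log ht]
        field_simp
    _ ≤ 1 / (√(2 * π) * σ) * exp (σ ^ 2 / 2 - μ) := by
        rw [hexponent]
        gcongr ?_ * exp ?_
        exact sub_le_self _ (by positivity)

theorem intervalIntegrable_logNormalDensity (hσ : 0 < σ) {b : ℝ} (hb : 0 < b) :
    IntervalIntegrable (logNormalDensity μ σ) volume 0 b := by
  have hmeas : Measurable (logNormalDensity μ σ) := by
    unfold logNormalDensity
    fun_prop
  refine (intervalIntegrable_const (c := 1 / (√(2 * π) * σ) * exp (σ ^ 2 / 2 - μ))).mono_fun'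
    hmeas.aestronglyMeasurable ?_
  rw [uIoc_of_le hb.le]
  filter_upwards [ae_restrict_mem measurableSet_Ioc] with t ht
  rw [norm_of_nonneg (logNormalDensity_pos μ hσ ht.1).le]
  exact logNormalDensity_le μ hσ ht.1

theorem logNormalDensity_mul_div (hσ : 0 < σ) {u x : ℝ} (hu : 0 < u) (hx : 0 < x) :
    logNormalDensity μ σ (x * u) / logNormalDensity μ σ x
      = u⁻¹ * exp (-log u * (2 * (log x - μ) + log u) / (2 * σ ^ 2)) := by
  have hexponent : -log u * (2 * (log x - μ) + log u) / (2 * σ ^ 2)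
      = -(log (x * u) - μ) ^ 2 / (2 * σ ^ 2) - -(log x - μ) ^ 2 / (2 * σ ^ 2) := by
    rw [log_mul hx.ne' hu.ne']
    ring
  rw [hexponent, exp_sub, logNormalDensity, logNormalDensity]
  field_simp

theorem monotoneOn_logNormalDensity_mul_div (hσ : 0 < σ) {u : ℝ} (hu : u ∈ Ioo (0 : ℝ) 1) :
    MonotoneOn (fun x => logNormalDensity μ σ (x * u) / logNormalDensity μ σ x) (Ioi 0) := by
  intro x (hx : 0 < x) y (hy : 0 < y) hxy
  have hlog : 0 ≤ -log u := neg_nonneg.2 (log_nonpos hu.1.le hu.2.le)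
  have hu₀ : 0 ≤ u⁻¹ := inv_nonneg.2 hu.1.le
  simp only [logNormalDensity_mul_div μ hσ hu.1 hx, logNormalDensity_mul_div μ hσ hu.1 hy]
  gcongr

end LogNormal

/-- For the log-normal density, the expected surplus s attains a
global maximum over [0, V] at some b* ∈ (0, V), and no point of (0, V) is a
local minimum of s on (0, V). -/
theorem surplus_global_max_logNormal (V σ μ : ℝ) (hV : 0 < V) (hσ : 0 < σ)
    (f F s : ℝ → ℝ)
    (hf : f = fun b =>
      1 / (Real.sqrt (2 * Real.pi) * σ * b) * Real.exp (-(Real.log b - μ) ^ 2 / (2 * σ ^ 2)))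
    (hF : F = fun b => ∫ t in (0 : ℝ)..b, f t)
    (hs : s = fun b => (V - b) * F b) :
    (∃ bStar ∈ Set.Ioo (0 : ℝ) V, ∀ b ∈ Set.Icc (0 : ℝ) V, s b ≤ s bStar) ∧
    ∀ b ∈ Set.Ioo (0 : ℝ) V, ¬ IsLocalMinOn s (Set.Ioo (0 : ℝ) V) b := by
  obtain rfl : f = logNormalDensity μ σ := hf
  obtain rfl : s = surplus V F := hs
  have hint (b : ℝ) (hb : b > 0) := intervalIntegrable_logNormalDensity μ hσ hb
  have hpos (t : ℝ) (ht : t > 0) := logNormalDensity_pos μ hσ ht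
  have hF_pos (b : ℝ) (hb : b ∈ Ioo 0 V) : 0 < F b :=
    hF ▸ integral_pos_of_pos_on_Ioi (hint b hb.1) hpos hb.1
  have hF_zero : F 0 = 0 := hF ▸ intervalIntegral.integral_same
  have hF_cont : ContinuousOn F (Icc 0 V) := by
    rw [hF, ← uIcc_of_le hV.le]
    exact intervalIntegral.continuousOn_primitive_interval' (hint V hV) left_mem_uIcc
  have hF_logConcave : ConcaveOn ℝ (Ioo 0 V) fun b => log (F b) := by
    rw [hF]
    exact (concaveOn_log_integral (continuousOn_logNormalDensity μ hσ) hint hpos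
      fun u hu => monotoneOn_logNormalDensity_mul_div μ hσ hu).subset Ioo_subset_Ioi_self
        (convex_Ioo 0 V)
  exact ⟨exists_isMaxOn_surplus hV hF_cont hF_zero hF_pos,
    fun b hb => not_isLocalMinOn_surplus hF_pos hF_logConcave hb⟩
end
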